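/- arXiv:1806.07411 — 2 statements merged into one kernel-verified Lean document; each statement's English description precedes it below -/
import Mathlib

section
/- The perturbed path of a random Markov system is a Markov chain with transition matrix M·N: let S be a finite set, q a probability distribution on the functions f : S → S, N a row-stochastic S × S matrix, (F_n)_{n ∈ ℕ} an i.i.d. sequence of random functions with law q, and let (Y_n) be a process with Y₀ = y₀ such that, conditionally on (F_0, …, F_n, Y_0, …, Y_n), the next state Y_{n+1} has distribution (D_{F_n}·N)(Y_n, ·), i.e. P(Y_{n+1} = j | F_0,…,F_n, Y_0,…,Y_n) = N(F_n(Y_n), j). Then (Y_n) is a Markov chain with transition matrix M·N: for all n and all j ∈ S, almost surely P(Y_{n+1} = j | Y_0, …, Y_n) = (M·N)(Y_n, j), where M = ∑_f q(f) D_f. -/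
open scoped BigOperators ENNReal
open MeasureTheory

/-- The deterministic transition matrix `D_f` of a function `f : S → S`. -/
def detMatrix {S : Type*} [Fintype S] [DecidableEq S] (f : S → S) : Matrix S S ℝ :=
  fun i j => if f i = j then 1 else 0

theorem rms_marginal {Ω U V : Type*} [Fintype U] [Fintype V] [MeasurableSpace Ω]
    (μ : Measure Ω) [IsProbabilityMeasure μ] (E : U → V → Set Ω) (D : V → Set Ω)
    (hD : ∀ v, D v ⊆ ⋃ u, E u v) (hU : ∀ ω, ∃ v, ω ∈ D v)
    (h1 : ∑ v, ∑ u, μ (E u v) = 1) (v : V) : μ (D v) = ∑ u, μ (E u v) := by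
  classical
  have hle : ∀ v, μ (D v) ≤ ∑ u, μ (E u v) := fun v =>
    (measure_mono (hD v)).trans (measure_iUnion_fintype_le _ _)
  have htot : 1 ≤ ∑ v, μ (D v) := by
    rw [← measure_univ (μ := μ)]
    refine le_trans (measure_mono ?_) (measure_iUnion_fintype_le μ D)
    intro ω _
    exact Set.mem_iUnion.2 (hU ω)
  refine le_antisymm (hle v) (not_lt.1 fun hlt => ?_)
  have hlt2 : ∑ v, μ (D v) < ∑ v, ∑ u, μ (E u v) := by
    rw [← Finset.add_sum_erase _ _ (Finset.mem_univ v),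
      ← Finset.add_sum_erase (a := v) _ (fun v => ∑ u, μ (E u v)) (Finset.mem_univ v)]
    refine ENNReal.add_lt_add_of_lt_of_le ?_ hlt (Finset.sum_le_sum fun v _ => hle v)
    exact (ENNReal.sum_lt_top.2 fun v _ => measure_lt_top μ _).ne
  rw [h1] at hlt2
  exact absurd htot (not_le.2 hlt2)

theorem rms_sum_snoc {A : Type*} [Fintype A] (n : ℕ) (φ : (Fin (n + 1) → A) → ℝ≥0∞) :
    ∑ g, φ g = ∑ a, ∑ g : Fin n → A, φ (Fin.snoc (α := fun _ => A) g a) := by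
  rw [← (Fin.snocEquiv (fun _ : Fin (n + 1) => A)).sum_comp, Fintype.sum_prod_type]
  rfl

/-- The perturbed path `(Y_n)` of a random Markov system is a Markov chain with
transition matrix `M·N`, where `M = ∑_f q(f) D_f`.  Hypotheses (all in elementary,
finite-dimensional form): `(F_n)` is i.i.d. with law `q`; each `F_n` is independent of
`(F_0, …, F_{n-1}, Y_0, …, Y_n)`; and conditionally on `(F_0, …, F_n, Y_0, …, Y_n)`,
the next state `Y_{n+1}` has law `N(F_n(Y_n), ·)`.  Conclusion: the elementary form of
`P(Y_{n+1} = j | Y_0, …, Y_n) = (M·N)(Y_n, j)` a.s. -/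
theorem rms_path_is_markov_chain
    {S : Type*} [Fintype S] [DecidableEq S] [Nonempty S]
    {Ω : Type*} [MeasurableSpace Ω] (μ : Measure Ω) [IsProbabilityMeasure μ]
    (q : (S → S) → ℝ) (hq0 : ∀ f, 0 ≤ q f) (hq1 : ∑ f : S → S, q f = 1)
    (N : Matrix S S ℝ) (hN0 : ∀ i j, 0 ≤ N i j) (hN1 : ∀ i, ∑ j, N i j = 1)
    (F : ℕ → Ω → (S → S))
    (hiid : ∀ (n : ℕ) (g : Fin (n + 1) → (S → S)),
      μ {ω | ∀ k : Fin (n + 1), F k.val ω = g k} =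
        ∏ k : Fin (n + 1), ENNReal.ofReal (q (g k)))
    (y₀ : S) (Y : ℕ → Ω → S)
    (hY0 : ∀ ω, Y 0 ω = y₀)
    (hFindep : ∀ (n : ℕ) (g : Fin (n + 1) → (S → S)) (s : Fin (n + 1) → S),
      μ {ω | (∀ k : Fin (n + 1), F k.val ω = g k) ∧ (∀ k : Fin (n + 1), Y k.val ω = s k)} =
        ENNReal.ofReal (q (g (Fin.last n))) *
          μ {ω | (∀ k : Fin n, F k.val ω = g k.castSucc) ∧
                 (∀ k : Fin (n + 1), Y k.val ω = s k)})
    (hcond : ∀ (n : ℕ) (j : S) (g : Fin (n + 1) → (S → S)) (s : Fin (n + 1) → S),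
      μ ({ω | Y (n + 1) ω = j} ∩
          {ω | (∀ k : Fin (n + 1), F k.val ω = g k) ∧ (∀ k : Fin (n + 1), Y k.val ω = s k)}) =
        ENNReal.ofReal (N (g (Fin.last n) (s (Fin.last n))) j) *
          μ {ω | (∀ k : Fin (n + 1), F k.val ω = g k) ∧
                 (∀ k : Fin (n + 1), Y k.val ω = s k)}) :
    ∀ (n : ℕ) (j : S) (s : Fin (n + 1) → S),
      μ ({ω | Y (n + 1) ω = j} ∩ {ω | ∀ k : Fin (n + 1), Y k.val ω = s k}) =
        ENNReal.ofReal (((∑ f : S → S, q f • detMatrix f) * N) (s (Fin.last n)) j) *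
          μ {ω | ∀ k : Fin (n + 1), Y k.val ω = s k} := by
  -- total masses
  have hqE : ∑ f : S → S, ENNReal.ofReal (q f) = 1 := by
    rw [← ENNReal.ofReal_sum_of_nonneg (fun f _ => hq0 f), hq1, ENNReal.ofReal_one]
  have hNE : ∀ i, ∑ j, ENNReal.ofReal (N i j) = 1 := fun i => by
    rw [← ENNReal.ofReal_sum_of_nonneg (fun j _ => hN0 i j), hN1, ENNReal.ofReal_one]
  -- summing out the last function
  have hstep : ∀ n (s : Fin (n + 1) → S) (c : (S → S) → ℝ≥0∞),
      ∑ g : Fin (n + 1) → (S → S), c (g (Fin.last n)) *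
        μ {ω | (∀ k : Fin (n + 1), F k.val ω = g k) ∧ (∀ k : Fin (n + 1), Y k.val ω = s k)} =
      (∑ f, c f * ENNReal.ofReal (q f)) * ∑ g : Fin n → (S → S),
        μ {ω | (∀ k : Fin n, F k.val ω = g k) ∧ (∀ k : Fin (n + 1), Y k.val ω = s k)} := by
    intro n s c
    rw [rms_sum_snoc, Finset.sum_mul]
    refine Finset.sum_congr rfl fun f _ => ?_
    rw [Finset.mul_sum]
    refine Finset.sum_congr rfl fun g _ => ?_
    rw [hFindep]
    simp only [Fin.snoc_last, Fin.snoc_castSucc, mul_assoc]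
  have hstep1 : ∀ n (s : Fin (n + 1) → S),
      ∑ g : Fin (n + 1) → (S → S),
        μ {ω | (∀ k : Fin (n + 1), F k.val ω = g k) ∧ (∀ k : Fin (n + 1), Y k.val ω = s k)} =
      ∑ g : Fin n → (S → S),
        μ {ω | (∀ k : Fin n, F k.val ω = g k) ∧ (∀ k : Fin (n + 1), Y k.val ω = s k)} := by
    intro n s
    simpa [hqE] using hstep n s (fun _ => 1)
  have hjoint : ∀ n, ∑ j, ∑ s : Fin (n + 1) → S, ∑ g : Fin (n + 1) → (S → S),
      μ ({ω | Y (n + 1) ω = j} ∩ {ω | (∀ k : Fin (n + 1), F k.val ω = g k) ∧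
        (∀ k : Fin (n + 1), Y k.val ω = s k)}) =
      ∑ s : Fin (n + 1) → S, ∑ g : Fin (n + 1) → (S → S),
      μ {ω | (∀ k : Fin (n + 1), F k.val ω = g k) ∧ (∀ k : Fin (n + 1), Y k.val ω = s k)} := by
    intro n
    rw [Finset.sum_comm]
    refine Finset.sum_congr rfl fun s _ => ?_
    rw [Finset.sum_comm]
    refine Finset.sum_congr rfl fun g _ => ?_
    simp only [hcond]
    rw [← Finset.sum_mul, hNE, one_mul]
  have htot : ∀ n, ∑ s : Fin (n + 1) → S, ∑ g : Fin n → (S → S),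
      μ {ω | (∀ k : Fin n, F k.val ω = g k) ∧ (∀ k : Fin (n + 1), Y k.val ω = s k)} = 1 := by
    intro n
    induction n with
    | zero =>
      rw [Finset.sum_eq_single (fun _ => y₀)]
      · simp [hY0]
      · intro s _ hs
        have : y₀ ≠ s 0 := fun h => hs (funext fun k => by rw [show k = 0 from Fin.ext (by simp), h])
        simp [hY0, this]
      · simp
    | succ n ih =>
      rw [← ih, rms_sum_snoc]
      simp only [← hstep1 n]
      rw [← hjoint n]
      refine Finset.sum_congr rfl fun j _ => Finset.sum_congr rfl fun s _ =>
        Finset.sum_congr rfl fun g _ => congrArg μ ?_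
      ext ω
      simp only [Set.mem_ofPred_eq, Set.mem_inter_iff, Fin.forall_fin_succ' (n := n + 1),
        Fin.snoc_last, Fin.snoc_castSucc, Fin.val_castSucc, Fin.val_last]
      tauto
  intro n j s
  have hA : μ {ω | ∀ k : Fin (n + 1), Y k.val ω = s k} = ∑ g : Fin n → (S → S),
      μ {ω | (∀ k : Fin n, F k.val ω = g k) ∧ (∀ k : Fin (n + 1), Y k.val ω = s k)} := by
    refine rms_marginal μ
      (fun (g : Fin n → (S → S)) (s : Fin (n + 1) → S) =>
        {ω | (∀ k : Fin n, F k.val ω = g k) ∧ (∀ k : Fin (n + 1), Y k.val ω = s k)})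
      (fun s => {ω | ∀ k : Fin (n + 1), Y k.val ω = s k}) ?_ ?_ (htot n) s
    · intro s ω hω
      exact Set.mem_iUnion.2 ⟨fun k => F k.val ω, fun k => rfl, hω⟩
    · intro ω
      exact ⟨fun k => Y k.val ω, fun k => rfl⟩
  have hB : μ ({ω | Y (n + 1) ω = j} ∩ {ω | ∀ k : Fin (n + 1), Y k.val ω = s k}) =
      ∑ g : Fin (n + 1) → (S → S), μ ({ω | Y (n + 1) ω = j} ∩
        {ω | (∀ k : Fin (n + 1), F k.val ω = g k) ∧ (∀ k : Fin (n + 1), Y k.val ω = s k)}) := by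
    refine rms_marginal μ
      (fun (g : Fin (n + 1) → (S → S)) (v : S × (Fin (n + 1) → S)) =>
        {ω | Y (n + 1) ω = v.1} ∩
        {ω | (∀ k : Fin (n + 1), F k.val ω = g k) ∧ (∀ k : Fin (n + 1), Y k.val ω = v.2 k)})
      (fun v => {ω | Y (n + 1) ω = v.1} ∩ {ω | ∀ k : Fin (n + 1), Y k.val ω = v.2 k})
      ?_ ?_ ?_ (j, s)
    · intro v ω hω
      exact Set.mem_iUnion.2 ⟨fun k => F k.val ω, hω.1, fun k => rfl, hω.2⟩
    · intro ω
      exact ⟨(Y (n + 1) ω, fun k => Y k.val ω), rfl, fun k => rfl⟩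
    · rw [Fintype.sum_prod_type, hjoint n]
      simp only [hstep1 n]
      exact htot n
  have hM : ENNReal.ofReal (((∑ f : S → S, q f • detMatrix f) * N) (s (Fin.last n)) j) =
      ∑ f : S → S, ENNReal.ofReal (N (f (s (Fin.last n))) j) * ENNReal.ofReal (q f) := by
    have : ((∑ f : S → S, q f • detMatrix f) * N) (s (Fin.last n)) j =
        ∑ f : S → S, N (f (s (Fin.last n))) j * q f := by
      rw [Finset.sum_mul, Matrix.sum_apply]
      refine Finset.sum_congr rfl fun f _ => ?_
      rw [Matrix.smul_mul, Matrix.smul_apply, Matrix.mul_apply]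
      simp [detMatrix, mul_comm]
    rw [this, ENNReal.ofReal_sum_of_nonneg (fun f _ => mul_nonneg (hN0 _ _) (hq0 f))]
    exact Finset.sum_congr rfl fun f _ => ENNReal.ofReal_mul (hN0 _ _)
  rw [hA, hB, hM, ← hstep n s (fun f => ENNReal.ofReal (N (f (s (Fin.last n))) j))]
  exact Finset.sum_congr rfl fun g _ => hcond n j g s
end

section
/- Mutual information recursion for a coupled Markov chain: let S be a finite set and let (X_n, Y_n)_{n ∈ ℕ} be a Markov chain on S × S with row-stochastic transition matrix W and deterministic initial state (X_0, Y_0) = (x_0, y_0). Assume there are row-stochastic S × S matrices M and M' that are the conditional marginals of W uniformly in the other coordinate: for all k, l, k' ∈ S, ∑_{l'} W((k,l),(k',l')) = M(k,k'), and for all k, l, l' ∈ S, ∑_{k'} W((k,l),(k',l')) = M'(l,l'). Let MI⁽ⁿ⁾(x₀,y₀) denote the mutual information between the random vectors (X_0, X_1, …, X_n) and (Y_0, Y_1, …, Y_n), and define the one-step quantity MI⁽¹⁾(k,l) = ∑_{k',l'} W((k,l),(k',l')) · log( W((k,l),(k',l')) / (M(k,k')·M'(l,l')) ) (with the convention 0·log(0/x)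 = 0). Then for every n ≥ 0, MI⁽ⁿ⁺¹⁾(x₀,y₀) = MI⁽ⁿ⁾(x₀,y₀) + ∑_{k,l ∈ S} (W^n)((x₀,y₀),(k,l)) · MI⁽¹⁾(k,l), where W^n is the n-th matrix power of W. -/
open scoped BigOperators ENNReal
open MeasureTheory

/-- `mlog p q = p * log (p / q)`, with the convention `0 * log (0 / q) = 0`. -/
noncomputable def mlog (p q : ℝ) : ℝ := if p = 0 then 0 else p * Real.log (p / q)

/-- The mutual information `MI⁽ⁿ⁾` between the random vectors `(X_0, …, X_n)` and
`(Y_0, …, Y_n)` of a pair of discrete-valued processes. -/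
noncomputable def pathMI {S Ω : Type*} [Fintype S] [MeasurableSpace Ω]
    (μ : Measure Ω) (X Y : ℕ → Ω → S) (n : ℕ) : ℝ :=
  ∑ a : Fin (n + 1) → S, ∑ b : Fin (n + 1) → S,
    mlog ((μ {ω | (∀ k : Fin (n + 1), X k.val ω = a k) ∧
          (∀ k : Fin (n + 1), Y k.val ω = b k)}).toReal)
      ((μ {ω | ∀ k : Fin (n + 1), X k.val ω = a k}).toReal *
        (μ {ω | ∀ k : Fin (n + 1), Y k.val ω = b k}).toReal)

open scoped Classical in
/-- Weight of a path of a Markov chain with matrix `W` started at `t₀`. -/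
noncomputable def pathP {T : Type*} (W : Matrix T T ℝ) (t₀ : T) (n : ℕ)
    (e : Fin (n + 1) → T) : ℝ :=
  if e 0 = t₀ then ∏ k : Fin n, W (e k.castSucc) (e k.succ) else 0

lemma pathP_succ {T : Type*} (W : Matrix T T ℝ) (t₀ : T) (n : ℕ) (e : Fin (n + 2) → T) :
    pathP W t₀ (n + 1) e =
      pathP W t₀ n (fun k => e k.castSucc) * W (e (Fin.last n).castSucc) (e (Fin.last (n + 1))) := by
  unfold pathP
  rw [Fin.prod_univ_castSucc]
  by_cases h : e 0 = t₀ <;> simp [h]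

lemma pathP_snoc {T : Type*} (W : Matrix T T ℝ) (t₀ : T) (n : ℕ) (e : Fin (n + 1) → T) (t : T) :
    pathP W t₀ (n + 1) (Fin.snoc (α := fun _ => T) e t) =
      pathP W t₀ n e * W (e (Fin.last n)) t := by
  rw [pathP_succ]; simp

lemma pathP_nonneg {T : Type*} (W : Matrix T T ℝ) (hW : ∀ s t, 0 ≤ W s t) (t₀ : T) (n : ℕ)
    (e : Fin (n + 1) → T) : 0 ≤ pathP W t₀ n e := by
  unfold pathP
  split_ifs
  · exact Finset.prod_nonneg fun _ _ => hW _ _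
  · exact le_rfl

lemma sum_snoc {T : Type*} [Fintype T] (n : ℕ) (f : (Fin (n + 1) → T) → ℝ) :
    ∑ e, f e = ∑ e : Fin n → T, ∑ t : T, f (Fin.snoc (α := fun _ => T) e t) := by
  rw [Finset.sum_comm, ← Fintype.sum_prod_type' (f := fun t e => f (Fin.snoc (α := fun _ => T) e t))]
  exact (Equiv.sum_comp (Fin.snocEquiv (fun _ => T)) f).symm

lemma sum_fin_one {T : Type*} [Fintype T] (f : (Fin 1 → T) → ℝ) :
    ∑ e, f e = ∑ t : T, f (fun _ => t) := by
  rw [← Equiv.sum_comp (Equiv.funUnique (Fin 1) T).symm]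
  rfl

lemma sum_pathP {T : Type*} [Fintype T] [DecidableEq T] (W : Matrix T T ℝ) (t₀ : T) (n : ℕ)
    (g : T → ℝ) :
    ∑ e, pathP W t₀ n e * g (e (Fin.last n)) = ∑ t, (W ^ n) t₀ t * g t := by
  induction n generalizing g with
  | zero =>
    rw [sum_fin_one]
    refine Finset.sum_congr rfl fun t _ => ?_
    simp [pathP, Matrix.one_apply, eq_comm]
  | succ n ih =>
    rw [sum_snoc]
    have := ih (fun t => ∑ t', W t t' * g t')
    simp only [pathP_snoc, Fin.snoc_last]
    simp only [mul_assoc, ← Finset.mul_sum]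
    rw [this]
    simp only [pow_succ, Matrix.mul_apply, Finset.sum_mul, Finset.mul_sum, mul_assoc]
    rw [Finset.sum_comm]

lemma marg_pathP {T S : Type*} [Fintype T] [DecidableEq S] (π : T → S) (W : Matrix T T ℝ)
    (M : Matrix S S ℝ) (h : ∀ t s', ∑ t', (if π t' = s' then W t t' else 0) = M (π t) s')
    (t₀ : T) (n : ℕ) (a : Fin (n + 1) → S) :
    ∑ e : Fin (n + 1) → T, (if (∀ k, π (e k) = a k) then pathP W t₀ n e else 0) =
      pathP M (π t₀) n a := by
  induction n with
  | zero =>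
    rw [sum_fin_one, Finset.sum_eq_single t₀]
    · simp [pathP, eq_comm]
    · intro b _ hb; simp [pathP, hb]
    · simp
  | succ n ih =>
    rw [sum_snoc, pathP_succ, ← ih, Finset.sum_mul]
    refine Finset.sum_congr rfl fun e _ => ?_
    simp only [pathP_snoc, Fin.forall_fin_succ' (n := n + 1), Fin.snoc_castSucc, Fin.snoc_last]
    by_cases hh : ∀ k, π (e k) = a k.castSucc
    · simp only [hh, implies_true, true_and, if_true]
      rw [← hh, ← h, Finset.mul_sum]
      refine Finset.sum_congr rfl fun t _ => ?_
      split_ifs <;> simp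
    · simp [hh]

lemma meas_part {Ω ι : Type*} [MeasurableSpace Ω] (μ : Measure Ω) [IsProbabilityMeasure μ]
    [Fintype ι] (F : Ω → ι) (p : ι → ℝ) (hp : ∀ i, μ.real {ω | F ω = i} = p i)
    (h1 : ∑ i, p i = 1) (Q : ι → Prop) [DecidablePred Q] :
    μ.real {ω | Q (F ω)} = ∑ i, if Q i then p i else 0 := by
  have key : ∀ (Q : ι → Prop) [DecidablePred Q], μ.real {ω | Q (F ω)} ≤ ∑ i, if Q i then p i else 0 := by
    intro Q _
    have hs : {ω | Q (F ω)} ⊆ ⋃ i ∈ Finset.univ.filter Q, {ω | F ω = i} := by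
      intro ω hω
      simpa using hω
    calc μ.real {ω | Q (F ω)} ≤ μ.real (⋃ i ∈ Finset.univ.filter Q, {ω | F ω = i}) :=
          measureReal_mono hs (measure_ne_top _ _)
      _ ≤ ∑ i ∈ Finset.univ.filter Q, μ.real {ω | F ω = i} :=
          measureReal_biUnion_finset_le _ _
      _ = _ := by rw [Finset.sum_filter]; simp only [hp]
  refine le_antisymm (key Q) ?_
  have h2 := key (fun i => ¬ Q i)
  have h3 : (1 : ℝ) ≤ μ.real {ω | Q (F ω)} + μ.real {ω | ¬ Q (F ω)} := by
    rw [← probReal_univ (μ := μ)]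
    refine le_trans (measureReal_mono ?_) (measureReal_union_le _ _)
    intro ω _
    exact em _
  have h4 : (∑ i, if Q i then p i else 0) + (∑ i, if ¬ Q i then p i else 0) = 1 := by
    rw [← h1, ← Finset.sum_add_distrib]
    refine Finset.sum_congr rfl fun i _ => ?_
    by_cases h : Q i <;> simp [h]
  linarith

lemma mlog_mul (P w A m B m' : ℝ) (hA : P ≠ 0 → A ≠ 0) (hB : P ≠ 0 → B ≠ 0)
    (hm : w ≠ 0 → m ≠ 0) (hm' : w ≠ 0 → m' ≠ 0) :
    mlog (P * w) ((A * m) * (B * m')) = mlog P (A * B) * w + P * mlog w (m * m') := by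
  unfold mlog
  by_cases hP : P = 0
  · simp [hP]
  by_cases hw : w = 0
  · simp [hw]
  have := hA hP; have := hB hP; have := hm hw; have := hm' hw
  simp only [hP, hw, mul_eq_zero, or_self, if_false]
  rw [show P * w / (A * m * (B * m')) = (P / (A * B)) * (w / (m * m')) by field_simp,
    Real.log_mul (by positivity) (by positivity)]
  ring

lemma sum_zip {S : Type*} [Fintype S] (n : ℕ) (f : (Fin n → S) → (Fin n → S) → ℝ) :
    ∑ a, ∑ b, f a b = ∑ e : Fin n → S × S, f (fun k => (e k).1) (fun k => (e k).2) := by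
  rw [← Fintype.sum_prod_type', ← Equiv.sum_comp (Equiv.arrowProdEquivProdArrow (Fin n) (fun _ => S) (fun _ => S))]
  rfl

/-- Mutual information recursion for a coupled Markov chain `(X_n, Y_n)` on `S × S` with
transition matrix `W`, deterministic initial state `(x₀, y₀)`, and conditional marginal
matrices `M`, `M'` (uniform in the other coordinate):
`MI⁽ⁿ⁺¹⁾(x₀,y₀) = MI⁽ⁿ⁾(x₀,y₀) + ∑_{k,l} (Wⁿ)((x₀,y₀),(k,l)) · MI⁽¹⁾(k,l)`, where
`MI⁽¹⁾(k,l) = ∑_{k',l'} W((k,l),(k',l')) log (W((k,l),(k',l')) / (M(k,k') M'(l,l')))`. -/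
theorem mutual_information_recursion
    {S : Type*} [Fintype S] [DecidableEq S] [Nonempty S]
    {Ω : Type*} [MeasurableSpace Ω] (μ : Measure Ω) [IsProbabilityMeasure μ]
    (W : Matrix (S × S) (S × S) ℝ)
    (hW0 : ∀ p p', 0 ≤ W p p') (hW1 : ∀ p, ∑ p', W p p' = 1)
    (M M' : Matrix S S ℝ)
    (hMrow : ∀ i, ∑ j, M i j = 1) (hM'row : ∀ i, ∑ j, M' i j = 1)
    (hM0 : ∀ i j, 0 ≤ M i j) (hM'0 : ∀ i j, 0 ≤ M' i j)
    (hM : ∀ k l k', ∑ l', W (k, l) (k', l') = M k k')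
    (hM' : ∀ k l l', ∑ k', W (k, l) (k', l') = M' l l')
    (x₀ y₀ : S) (X Y : ℕ → Ω → S)
    (hchain : ∀ (n : ℕ) (e : Fin (n + 1) → S × S),
      μ {ω | ∀ k : Fin (n + 1), (X k.val ω, Y k.val ω) = e k} =
        ENNReal.ofReal
          (if e 0 = (x₀, y₀) then ∏ k : Fin n, W (e k.castSucc) (e k.succ) else 0)) :
    ∀ n : ℕ,
      pathMI μ X Y (n + 1) =
        pathMI μ X Y n +
          ∑ k : S, ∑ l : S,
            (W ^ n) (x₀, y₀) (k, l) *
              (∑ k' : S, ∑ l' : S, mlog (W (k, l) (k', l')) (M k k' * M' l l')) := by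
  classical
  have hP0 := pathP_nonneg W hW0 (x₀, y₀)
  have hMx : ∀ (t : S × S) s', ∑ t', (if t'.1 = s' then W t t' else 0) = M t.1 s' := by
    rintro ⟨k, l⟩ s'
    rw [Fintype.sum_prod_type, ← hM k l s', Finset.sum_eq_single s']
    · simp
    · intro b _ hb; simp [hb]
    · simp
  have hMy : ∀ (t : S × S) s', ∑ t', (if t'.2 = s' then W t t' else 0) = M' t.2 s' := by
    rintro ⟨k, l⟩ s'
    rw [Fintype.sum_prod_type, ← hM' k l s']
    simp
  have hpow : ∀ n, ∑ e, pathP W (x₀, y₀) n e = 1 := by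
    intro n
    induction n with
    | zero => have := sum_pathP W (x₀, y₀) 0 (fun _ => 1); simpa [Matrix.one_apply] using this
    | succ n ih =>
      rw [sum_snoc]
      simp only [pathP_snoc, ← Finset.mul_sum, hW1, mul_one, ih]
  have hJ : ∀ n (e : Fin (n + 1) → S × S),
      μ.real {ω | (fun k : Fin (n + 1) => (X k.val ω, Y k.val ω)) = e} =
        pathP W (x₀, y₀) n e := by
    intro n e
    have h1 := hchain n e
    have h2 : (if e 0 = (x₀, y₀) then ∏ k : Fin n, W (e k.castSucc) (e k.succ) else 0) =
      pathP W (x₀, y₀) n e := by unfold pathP; congr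
    rw [h2] at h1
    simp only [funext_iff, Measure.real]
    rw [h1, ENNReal.toReal_ofReal (hP0 n e)]
  have hX : ∀ n (a : Fin (n + 1) → S),
      (μ {ω | ∀ k : Fin (n + 1), X k.val ω = a k}).toReal = pathP M x₀ n a := by
    intro n a
    rw [← marg_pathP Prod.fst W M hMx (x₀, y₀) n a]
    exact meas_part μ _ _ (hJ n) (hpow n) (fun e => ∀ k, (e k).1 = a k)
  have hY : ∀ n (a : Fin (n + 1) → S),
      (μ {ω | ∀ k : Fin (n + 1), Y k.val ω = a k}).toReal = pathP M' y₀ n a := by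
    intro n a
    rw [← marg_pathP Prod.snd W M' hMy (x₀, y₀) n a]
    exact meas_part μ _ _ (hJ n) (hpow n) (fun e => ∀ k, (e k).2 = a k)
  have hMI : ∀ n, pathMI μ X Y n = ∑ e : Fin (n + 1) → S × S,
      mlog (pathP W (x₀, y₀) n e)
        (pathP M x₀ n (fun k => (e k).1) * pathP M' y₀ n (fun k => (e k).2)) := by
    intro n
    unfold pathMI
    rw [sum_zip]
    refine Finset.sum_congr rfl fun e _ => ?_
    rw [hX, hY, ← hJ]
    simp only [funext_iff, Prod.ext_iff, forall_and, Measure.real]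
  have neX : ∀ n (e : Fin (n + 1) → S × S), pathP W (x₀, y₀) n e ≠ 0 →
      pathP M x₀ n (fun k => (e k).1) ≠ 0 := by
    intro n e he h0
    rw [← marg_pathP Prod.fst W M hMx (x₀, y₀) n, Finset.sum_eq_zero_iff_of_nonneg] at h0
    · exact he (by simpa using h0 e (Finset.mem_univ _))
    · intro e _; split_ifs; exacts [hP0 n e, le_rfl]
  have neY : ∀ n (e : Fin (n + 1) → S × S), pathP W (x₀, y₀) n e ≠ 0 →
      pathP M' y₀ n (fun k => (e k).2) ≠ 0 := by
    intro n e he h0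
    rw [← marg_pathP Prod.snd W M' hMy (x₀, y₀) n, Finset.sum_eq_zero_iff_of_nonneg] at h0
    · exact he (by simpa using h0 e (Finset.mem_univ _))
    · intro e _; split_ifs; exacts [hP0 n e, le_rfl]
  have neM : ∀ t t' : S × S, W t t' ≠ 0 → M t.1 t'.1 ≠ 0 := by
    intro t t' he h0
    rw [← hMx, Finset.sum_eq_zero_iff_of_nonneg] at h0
    · exact he (by simpa using h0 t' (Finset.mem_univ _))
    · intro e _; split_ifs; exacts [hW0 _ _, le_rfl]
  have neM' : ∀ t t' : S × S, W t t' ≠ 0 → M' t.2 t'.2 ≠ 0 := by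
    intro t t' he h0
    rw [← hMy, Finset.sum_eq_zero_iff_of_nonneg] at h0
    · exact he (by simpa using h0 t' (Finset.mem_univ _))
    · intro e _; split_ifs; exacts [hW0 _ _, le_rfl]
  intro n
  have hlast := sum_pathP W (x₀, y₀) n
    (fun t => ∑ t' : S × S, mlog (W t t') (M t.1 t'.1 * M' t.2 t'.2))
  simp only [Fintype.sum_prod_type (f := fun t : S × S => (W ^ n) (x₀, y₀) t * _)] at hlast
  simp only [← Fintype.sum_prod_type' (f := fun k' l' => mlog (W _ (k', l')) (M _ k' * M' _ l'))]
  rw [← hlast, hMI, hMI, sum_snoc, ← Finset.sum_add_distrib]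
  refine Finset.sum_congr rfl fun e _ => ?_
  rw [Finset.mul_sum]
  have : ∀ c : ℝ, c = ∑ t', c * W (e (Fin.last n)) t' := by
    intro c; rw [← Finset.mul_sum, hW1, mul_one]
  rw [this (mlog _ _), ← Finset.sum_add_distrib]
  refine Finset.sum_congr rfl fun t _ => ?_
  rw [pathP_snoc, pathP_succ M, pathP_succ M']
  simp only [Fin.snoc_castSucc, Fin.snoc_last]
  exact mlog_mul _ _ _ _ _ _ (neX n e) (neY n e) (neM _ _) (neM' _ _)
end
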